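/- arXiv:1603.03887 — 2 statements merged into one kernel-verified Lean document; each statement's English description precedes it below -/
import Mathlib

section
/- Let s ∈ {0,1}^{-ℕ} be an admissible left-infinite sequence with τ_L(s) < ∞ and τ_R(s) < ∞. Then the projection of the basic arc A(s) to the 0-th coordinate satisfies π_0(A(s)) = [T^{τ_L(s)}(c), T^{τ_R(s)}(c)]. -/
/-- `T : ℝ → ℝ` is a unimodal map on `[0,1]` with critical point `c`. -/
def IsUnimodal (T : ℝ → ℝ) (c : ℝ) : Prop :=
  ContinuousOn T (Set.Icc 0 1) ∧ Set.MapsTo T (Set.Icc 0 1) (Set.Icc 0 1) ∧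
    T 0 = 0 ∧ 0 < c ∧ c < 1 ∧
    StrictMonoOn T (Set.Icc 0 c) ∧ StrictAntiOn T (Set.Icc c 1)

-- Symbols `0, *, 1` are encoded as `(0 : Fin 3), (1 : Fin 3), (2 : Fin 3)`
-- respectively; this realizes the order `0 < * < 1`.
open Classical in
/-- The raw (unmodified) itinerary of `x`: the `n`-th symbol is `0` if `Tⁿ(x) < c`,
`*` if `Tⁿ(x) = c` and `1` if `Tⁿ(x) > c`. -/
noncomputable def rawItin (T : ℝ → ℝ) (c : ℝ) (x : ℝ) : ℕ → Fin 3 := fun n =>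
  if T^[n] x < c then 0 else if T^[n] x = c then 1 else 2

/-- The number of `1`s among the first `k` symbols of `s`. -/
def onesCount (s : ℕ → Fin 3) (k : ℕ) : ℕ :=
  ((Finset.range k).filter fun i => s i = 2).card

/-- The (strict) parity-lexicographical ordering on `{0,*,1}^ℕ`. -/
def PlexLt (s t : ℕ → Fin 3) : Prop :=
  ∃ k : ℕ, (∀ i < k, s i = t i) ∧ s k ≠ t k ∧
    ((s k < t k ∧ Even (onesCount s k)) ∨ (t k < s k ∧ Odd (onesCount s k)))

/-- The parity-lexicographical ordering `⪯`. -/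
def PlexLe (s t : ℕ → Fin 3) : Prop := PlexLt s t ∨ s = t

open Classical in
/-- The (modified) kneading sequence `ν = c₁c₂… = I(T(c))`: if the critical point is
periodic, so that the raw itinerary of `T(c)` contains `*` (first at index `n-1`, whence it
is `(c₁…c_{n-1}*)^∞`), then `ν` is the parity-lexicographically smaller of
`(c₁…c_{n-1}0)^∞` and `(c₁…c_{n-1}1)^∞`. -/
noncomputable def kneading (T : ℝ → ℝ) (c : ℝ) : ℕ → Fin 3 :=
  if h : ∃ i, rawItin T c (T c) i = 1 then
    let n := Nat.find h + 1
    let w : Fin 3 → ℕ → Fin 3 := fun b j =>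
      if j % n = n - 1 then b else rawItin T c (T c) (j % n)
    if PlexLe (w 0) (w 2) then w 0 else w 2
  else rawItin T c (T c)

open Classical in
/-- The modified itinerary of `x`: it agrees with the raw itinerary up to the first
occurrence of `*` (if any), and after that first `*` it continues with the modified
kneading sequence `ν`. -/
noncomputable def itin (T : ℝ → ℝ) (c : ℝ) (x : ℝ) : ℕ → Fin 3 :=
  if h : ∃ i, T^[i] x = c then
    fun n =>
      if n < Nat.find h then rawItin T c x n
      else if n = Nat.find h then 1
      else kneading T c (n - Nat.find h - 1)
  else rawItin T c x


/-- The inverse limit `X = lim←([0,1], T)`, modelled as sequences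
`x : ℕ → ℝ` where `x n` represents the coordinate `x_{-n}`. -/
def invLimitSet (T : ℝ → ℝ) : Set (ℕ → ℝ) :=
  {x | (∀ n, x n ∈ Set.Icc (0 : ℝ) 1) ∧ ∀ n, T (x (n + 1)) = x n}

/-- Encoding of the two-element alphabet `{0,1}` into `{0,*,1}`:
`false ↦ 0` and `true ↦ 1` (i.e. `(2 : Fin 3)`). -/
def b2f (b : Bool) : Fin 3 := if b then 2 else 0

/-- A left-infinite sequence `s = …s_{-2}s_{-1} ∈ {0,1}^{-ℕ}` is modelled as
`s : ℕ → Bool` with `s i` representing `s_{-(i+1)}`. It is admissible if every finite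
subword `s_{-(m+1)} … s_{-1}` of it occurs in the (modified) itinerary of some point
of `[0,1]`. -/
def AdmissibleLeft (T : ℝ → ℝ) (c : ℝ) (s : ℕ → Bool) : Prop :=
  ∀ m : ℕ, ∃ x ∈ Set.Icc (0 : ℝ) 1, ∃ p : ℕ,
    ∀ j ≤ m, itin T c x (p + j) = b2f (s (m - j))

/-- The word condition `s_{-(n-1)} … s_{-1} = c₁ … c_{n-1}`, where `ν = c₁c₂…` is the
(modified) kneading sequence, i.e. `c_j = kneading T c (j-1)`; for `n = 1` it is vacuous. -/
noncomputable def PrefixMatch (T : ℝ → ℝ) (c : ℝ) (s : ℕ → Bool) (n : ℕ) : Prop :=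
  ∀ i, i < n - 1 → b2f (s i) = kneading T c (n - 2 - i)

/-- `#_1(c₁…c_k)`: the number of `1`s among the first `k` entries of the kneading sequence. -/
noncomputable def kneadOnes (T : ℝ → ℝ) (c : ℝ) (k : ℕ) : ℕ :=
  ((Finset.range k).filter fun j => kneading T c j = 2).card

/-- The set `{n > 1 : s_{-(n-1)}…s_{-1} = c₁…c_{n-1}, #_1(c₁…c_{n-1}) odd}`;
`τ_L(s)` is its supremum. -/
def tauLSet (T : ℝ → ℝ) (c : ℝ) (s : ℕ → Bool) : Set ℕ :=
  {n | 1 < n ∧ PrefixMatch T c s n ∧ Odd (kneadOnes T c (n - 1))}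

/-- The set `{n ≥ 1 : s_{-(n-1)}…s_{-1} = c₁…c_{n-1}, #_1(c₁…c_{n-1}) even}`;
`τ_R(s)` is its supremum. -/
def tauRSet (T : ℝ → ℝ) (c : ℝ) (s : ℕ → Bool) : Set ℕ :=
  {n | 1 ≤ n ∧ PrefixMatch T c s n ∧ Even (kneadOnes T c (n - 1))}

/-- `x_i` matches the symbol `s_i ∈ {0,1}` : either `x_i` lies strictly on the side
of `c` prescribed by `s_i`, or `x_i = c` (in which case, after the identifications of
itineraries containing `*`, the coordinate matches both symbols). -/
def SymMatch (c y : ℝ) (b : Bool) : Prop :=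
  y = c ∨ (y < c ∧ b = false) ∨ (c < y ∧ b = true)

/-- The basic arc `A(s) = {x ∈ X : ν_i(x) = s_i for all i < 0}` of an admissible
left-infinite sequence `s`. -/
def basicArc (T : ℝ → ℝ) (c : ℝ) (s : ℕ → Bool) : Set (ℕ → ℝ) :=
  {x | x ∈ invLimitSet T ∧ ∀ i : ℕ, SymMatch c (x (i + 1)) (s i)}

/-- The projection `π₀` of the inverse limit to the `0`-th coordinate. -/
def proj0 (x : ℕ → ℝ) : ℝ := x 0

/-- Closed matching of a symbol. -/
def CM (c : ℝ) (v : Fin 3) (y : ℝ) : Prop := (v = 0 → y ≤ c) ∧ (v = 2 → c ≤ y)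

lemma rawItin_CM (T : ℝ → ℝ) (c x : ℝ) (n : ℕ) : CM c (rawItin T c x n) (T^[n] x) := by
  unfold CM rawItin
  split_ifs with h1 h2
  · exact ⟨fun _ => h1.le, fun h => absurd h (by decide)⟩
  · exact ⟨fun h => absurd h (by decide), fun h => absurd h (by decide)⟩
  · exact ⟨fun h => absurd h (by decide), fun _ => not_lt.1 h1⟩

lemma rawItin_eq_one (T : ℝ → ℝ) (c x : ℝ) (n : ℕ) : rawItin T c x n = 1 ↔ T^[n] x = c := by
  unfold rawItin
  split_ifs with h1 h2
  · simp [h1.ne]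
  · simp [h2]
  · simp [h2]

lemma fin3_cases (v : Fin 3) (h : v ≠ 1) : v = 0 ∨ v = 2 := by
  revert v; decide

/-- All properties of the kneading sequence that are needed. -/
lemma kneading_props (T : ℝ → ℝ) (c : ℝ) :
    (∀ j, kneading T c j ≠ 1) ∧ (∀ j, CM c (kneading T c j) (T^[j] (T c))) ∧
    (∀ i j, T^[i] (T c) = c → T^[j] (T c) = c → kneading T c i = kneading T c j) := by
  classical
  by_cases h : ∃ i, rawItin T c (T c) i = 1
  · obtain ⟨b, hb1, hb⟩ : ∃ b : Fin 3, b ≠ 1 ∧ ∀ j, kneading T c j =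
        if j % (Nat.find h + 1) = Nat.find h then b
        else rawItin T c (T c) (j % (Nat.find h + 1)) := by
      unfold kneading
      rw [dif_pos h]
      simp only [Nat.add_sub_cancel]
      split_ifs
      · exact ⟨0, by decide, fun j => rfl⟩
      · exact ⟨2, by decide, fun j => rfl⟩
    set N := Nat.find h with hN
    have hNc : T^[N] (T c) = c := (rawItin_eq_one T c (T c) N).1 (Nat.find_spec h)
    have hmin : ∀ j, j < N → rawItin T c (T c) j ≠ 1 := fun j hj => Nat.find_min h hj
    have hper : Function.IsPeriodicPt T (N + 1) (T c) := by
      show T^[N+1] (T c) = T c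
      rw [Function.iterate_succ_apply', hNc]
    have hmod : ∀ j, T^[j] (T c) = T^[j % (N + 1)] (T c) := fun j =>
      (hper.iterate_mod_apply j).symm
    have hlt : ∀ j, j % (N + 1) ≠ N → j % (N + 1) < N := fun j hj => by
      have := Nat.mod_lt j (show 0 < N + 1 by omega)
      omega
    refine ⟨fun j => ?_, fun j => ?_, fun i j hi hj => ?_⟩
    · rw [hb]
      split_ifs with hj
      · exact hb1
      · exact hmin _ (hlt j hj)
    · rw [hb, hmod]
      split_ifs with hj
      · rw [hj, hNc]
        exact ⟨fun _ => le_rfl, fun _ => le_rfl⟩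
      · exact rawItin_CM _ _ _ _
    · have key : ∀ j, T^[j] (T c) = c → kneading T c j = b := by
        intro j hj
        rw [hb]
        split_ifs with hj2
        · rfl
        · exfalso
          rw [hmod] at hj
          exact hmin _ (hlt j hj2) ((rawItin_eq_one T c (T c) _).2 hj)
      rw [key i hi, key j hj]
  · have hk : kneading T c = rawItin T c (T c) := by
      unfold kneading
      rw [dif_neg h]
    push Not at h
    rw [hk]
    refine ⟨h, fun j => rawItin_CM _ _ _ _, fun i j hi hj => ?_⟩
    exact absurd ((rawItin_eq_one T c (T c) i).2 hi) (h i)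

lemma kneadOnes_succ (T : ℝ → ℝ) (c : ℝ) (k : ℕ) :
    kneadOnes T c (k + 1) = kneadOnes T c k + if kneading T c k = 2 then 1 else 0 := by
  unfold kneadOnes
  rw [Finset.range_add_one, Finset.filter_insert]
  split_ifs with h
  · rw [Finset.card_insert_of_notMem (by simp)]
  · simp

lemma iter_mem {T : ℝ → ℝ} {c : ℝ} (hT : IsUnimodal T c) {y : ℝ} (hy : y ∈ Set.Icc (0:ℝ) 1)
    (k : ℕ) : T^[k] y ∈ Set.Icc (0:ℝ) 1 := hT.2.1.iterate k hy

lemma le_Tc {T : ℝ → ℝ} {c : ℝ} (hT : IsUnimodal T c) {y : ℝ} (hy : y ∈ Set.Icc (0:ℝ) 1) :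
    T y ≤ T c := by
  obtain ⟨-, -, -, h0, h1, hm, ha⟩ := hT
  rcases le_total y c with h | h
  · exact hm.monotoneOn ⟨hy.1, h⟩ ⟨h0.le, le_rfl⟩ h
  · exact ha.antitoneOn ⟨le_rfl, h1.le⟩ ⟨h, hy.2⟩ h

lemma cmpIter {T : ℝ → ℝ} {c : ℝ} (hT : IsUnimodal T c) {y : ℝ} (hy : y ∈ Set.Icc (0:ℝ) 1)
    (hyc : y ≤ T c) (k : ℕ) (hk : ∀ i < k, CM c (kneading T c i) (T^[i] y)) :
    (Even (kneadOnes T c k) → T^[k] y ≤ T^[k] (T c)) ∧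
    (Odd (kneadOnes T c k) → T^[k] (T c) ≤ T^[k] y) := by
  obtain ⟨kn1, kn2, -⟩ := kneading_props T c
  have hc : T c ∈ Set.Icc (0:ℝ) 1 := hT.2.1 ⟨hT.2.2.2.1.le, hT.2.2.2.2.1.le⟩
  induction k with
  | zero => simp [kneadOnes, hyc]
  | succ k ih =>
    have ih := ih (fun i hi => hk i (by omega))
    have h1 := hk k (by omega)
    have h2 := kn2 k
    have m1 := iter_mem hT hy k
    have m2 := iter_mem hT hc k
    have hm := hT.2.2.2.2.2.1.monotoneOn
    have ha := hT.2.2.2.2.2.2.antitoneOn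
    rw [kneadOnes_succ, Function.iterate_succ_apply', Function.iterate_succ_apply']
    rcases fin3_cases _ (kn1 k) with h | h
    · have h1 := h1.1 h
      have h2 := h2.1 h
      rw [if_neg (by rw [h]; decide), add_zero]
      exact ⟨fun e => hm ⟨m1.1, h1⟩ ⟨m2.1, h2⟩ (ih.1 e),
        fun e => hm ⟨m2.1, h2⟩ ⟨m1.1, h1⟩ (ih.2 e)⟩
    · have h1 := h1.2 h
      have h2 := h2.2 h
      rw [if_pos h]
      refine ⟨fun e => ha ⟨h2, m2.2⟩ ⟨h1, m1.2⟩ (ih.2 ?_),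
        fun e => ha ⟨h1, m1.2⟩ ⟨h2, m2.2⟩ (ih.1 ?_)⟩
      · rw [Nat.even_add_one] at e
        exact Nat.not_even_iff_odd.1 e
      · rw [Nat.odd_add_one] at e
        exact Nat.not_odd_iff_even.1 e

/-- Match of the last `k` symbols with the kneading sequence. -/
def KM (T : ℝ → ℝ) (c : ℝ) (s : ℕ → Bool) (k : ℕ) : Prop :=
  ∀ i < k, b2f (s i) = kneading T c (k - 1 - i)

lemma KM_succ {T : ℝ → ℝ} {c : ℝ} {s : ℕ → Bool} {k : ℕ}
    (h : KM T c (fun i => s (i + 1)) k) (h0 : b2f (s 0) = kneading T c k) :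
    KM T c s (k + 1) := by
  intro i hi
  rcases i with _ | i
  · simpa using h0
  · have := h i (by omega)
    simp only at this
    rw [this]
    congr 1
    omega

/-- The order condition on admissible sequences. -/
def StarCond (T : ℝ → ℝ) (c : ℝ) (s : ℕ → Bool) : Prop :=
  ∀ j k, KM T c (fun i => s (j + 1 + i)) k →
    (s j = true → kneading T c k = 0 → ¬ Even (kneadOnes T c k)) ∧
    (s j = false → kneading T c k = 2 → ¬ Odd (kneadOnes T c k))

lemma core {T : ℝ → ℝ} {c : ℝ} (hT : IsUnimodal T c) {y : ℝ} (hy : y ∈ Set.Icc (0:ℝ) 1)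
    (hyc : y ≤ T c) (k : ℕ) (hk : ∀ i < k, CM c (kneading T c i) (T^[i] y)) (v : Fin 3)
    (hv : CM c v (T^[k] y))
    (hs : T^[k] y = c → T^[k] (T c) = c → v = kneading T c k) :
    (v = 2 → kneading T c k = 0 → ¬ Even (kneadOnes T c k)) ∧
    (v = 0 → kneading T c k = 2 → ¬ Odd (kneadOnes T c k)) := by
  obtain ⟨h1, h2⟩ := cmpIter hT hy hyc k hk
  have h3 := (kneading_props T c).2.1 k
  constructor
  · intro a b e
    have e1 := h1 e
    have e2 := hv.2 a
    have e3 := h3.1 b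
    have := hs (by linarith) (by linarith)
    rw [a, b] at this
    exact absurd this (by decide)
  · intro a b e
    have e1 := h2 e
    have e2 := hv.1 a
    have e3 := h3.2 b
    have := hs (by linarith) (by linarith)
    rw [a, b] at this
    exact absurd this (by decide)

lemma b2f_ne (b : Bool) : b2f b ≠ 1 := by cases b <;> decide

lemma star_of_adm {T : ℝ → ℝ} {c : ℝ} (hT : IsUnimodal T c) {s : ℕ → Bool}
    (hadm : AdmissibleLeft T c s) : StarCond T c s := by
  classical
  intro j k hM
  obtain ⟨kn1, kn2, kn3⟩ := kneading_props T c
  have hc : T c ∈ Set.Icc (0:ℝ) 1 := hT.2.1 ⟨hT.2.2.2.1.le, hT.2.2.2.2.1.le⟩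
  obtain ⟨x, hx, p, hp⟩ := hadm (j + k + 1)
  have q1 : ∀ i < k, itin T c x (p + 1 + i) = kneading T c i := by
    intro i hi
    have a := hp (i + 1) (by omega)
    have b := hM (k - 1 - i) (by omega)
    simp only at b
    rw [show p + 1 + i = p + (i + 1) by omega, a,
      show j + k + 1 - (i + 1) = j + 1 + (k - 1 - i) by omega, b]
    congr 1
    omega
  have q2 : itin T c x (p + 1 + k) = b2f (s j) := by
    have a := hp (k + 1) (by omega)
    rw [show p + 1 + k = p + (k + 1) by omega, a]
    congr 2
    omega
  have q3 : ∀ a ≤ j + k + 1, itin T c x (p + a) ≠ 1 := fun a ha => by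
    rw [hp a ha]; exact b2f_ne _
  have fin : (b2f (s j) = 2 → kneading T c k = 0 → ¬ Even (kneadOnes T c k)) ∧
    (b2f (s j) = 0 → kneading T c k = 2 → ¬ Odd (kneadOnes T c k)) := by
    have raw : (∀ i ≤ k, itin T c x (p + 1 + i) = rawItin T c x (p + 1 + i)) →
        (b2f (s j) = 2 → kneading T c k = 0 → ¬ Even (kneadOnes T c k)) ∧
        (b2f (s j) = 0 → kneading T c k = 2 → ¬ Odd (kneadOnes T c k)) := by
      intro hr
      have it : ∀ i, T^[p + 1 + i] x = T^[i] (T^[p + 1] x) := fun i => by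
        rw [← Function.iterate_add_apply, Nat.add_comm]
      refine core hT (y := T^[p+1] x) (iter_mem hT hx _) ?_ k ?_ (b2f (s j)) ?_ ?_
      · rw [Function.iterate_succ_apply']
        exact le_Tc hT (iter_mem hT hx _)
      · intro i hi
        rw [← q1 i hi, hr i hi.le, ← it]
        exact rawItin_CM _ _ _ _
      · rw [← q2, hr k le_rfl, ← it]
        exact rawItin_CM _ _ _ _
      · intro e
        rw [← it, ← rawItin_eq_one, ← hr k le_rfl, q2] at e
        exact absurd e (b2f_ne _)
    by_cases h : ∃ i, T^[i] x = c
    · have hit : ∀ n, itin T c x n = if n < Nat.find h then rawItin T c x n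
          else if n = Nat.find h then 1 else kneading T c (n - Nat.find h - 1) := by
        intro n
        unfold itin
        rw [dif_pos h]
      set N := Nat.find h
      have hne : ∀ a ≤ j + k + 1, p + a ≠ N := by
        intro a ha e
        apply q3 a ha
        rw [hit, if_neg (by omega), if_pos e]
      by_cases hpN : p + k + 1 < N
      · apply raw
        intro i hi
        rw [hit, if_pos (by omega)]
      · have hNp : N < p := by
          by_contra hcon
          exact hne (N - p) (by omega) (by omega)
        have hit2 : ∀ i, itin T c x (p + 1 + i) = kneading T c (i + (p - N)) := by
          intro i
          rw [hit, if_neg (by omega), if_neg (by omega)]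
          congr 1
          omega
        refine core hT (y := T^[p - N] (T c)) (iter_mem hT hc _) ?_ k ?_ (b2f (s j)) ?_ ?_
        · rw [← Function.iterate_succ_apply, Function.iterate_succ_apply']
          exact le_Tc hT (iter_mem hT ⟨hT.2.2.2.1.le, hT.2.2.2.2.1.le⟩ _)
        · intro i hi
          rw [← q1 i hi, hit2, ← Function.iterate_add_apply]
          exact kn2 _
        · rw [← q2, hit2, ← Function.iterate_add_apply]
          exact kn2 _
        · intro e1 e2
          rw [← q2, hit2]
          rw [← Function.iterate_add_apply] at e1
          exact kn3 _ _ e1 e2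
    · apply raw
      intro i hi
      unfold itin
      rw [dif_neg h]
  refine ⟨fun h => fin.1 (by rw [h]; rfl), fun h => fin.2 (by rw [h]; rfl)⟩

/-- The region that equals the projection of the basic arc. -/
def Reg (T : ℝ → ℝ) (c : ℝ) (s : ℕ → Bool) : Set ℝ :=
  {y | 0 ≤ y ∧ ∀ k, KM T c s k → (Even (kneadOnes T c k) → y ≤ T^[k] (T c)) ∧
    (Odd (kneadOnes T c k) → T^[k] (T c) ≤ y)}

lemma Reg_le {T : ℝ → ℝ} {c : ℝ} {s : ℕ → Bool} {y : ℝ} (hy : y ∈ Reg T c s) : y ≤ T c := by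
  have := (hy.2 0 (fun i hi => by omega)).1 (by simp [kneadOnes])
  simpa using this

lemma step {T : ℝ → ℝ} {c : ℝ} (hT : IsUnimodal T c) {s : ℕ → Bool} (hs : StarCond T c s)
    {y : ℝ} (hy : y ∈ Reg T c s) :
    ∃ x ∈ Reg T c (fun i => s (i + 1)), T x = y ∧ SymMatch c x (s 0) := by
  obtain ⟨kn1, kn2, -⟩ := kneading_props T c
  have hTc : T c ∈ Set.Icc (0:ℝ) 1 := hT.2.1 ⟨hT.2.2.2.1.le, hT.2.2.2.2.1.le⟩
  have hyT := Reg_le hy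
  obtain ⟨hcont, hmap, hT0, h0, h1, hm, ha⟩ := id hT
  have hs0 : ∀ k, KM T c (fun i => s (i + 1)) k →
      (s 0 = true → kneading T c k = 0 → ¬ Even (kneadOnes T c k)) ∧
      (s 0 = false → kneading T c k = 2 → ¬ Odd (kneadOnes T c k)) := by
    intro k hk
    apply hs 0 k
    intro i hi
    have := hk i hi
    simpa [Nat.add_comm] using this
  cases hb : s 0 with
  | true =>
    have hup : ∀ k, KM T c (fun i => s (i + 1)) k → Even (kneadOnes T c k) →
        c ≤ T^[k] (T c) ∧ T (T^[k] (T c)) ≤ y := by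
      intro k hk he
      have h2 : kneading T c k = 2 := by
        rcases fin3_cases _ (kn1 k) with h | h
        · exact absurd he ((hs0 k hk).1 hb h)
        · exact h
      refine ⟨(kn2 k).2 h2, ?_⟩
      have := (hy.2 (k + 1) (KM_succ hk (by rw [hb, h2]; rfl))).2
        (by rw [kneadOnes_succ, if_pos h2]; exact he.add_one)
      rwa [Function.iterate_succ_apply'] at this
    have hz := hup 0 (fun i hi => by omega) (by simp [kneadOnes])
    simp only [Function.iterate_zero, id] at hz
    have hsub : Set.Icc c (T c) ⊆ Set.Icc 0 1 := Set.Icc_subset_Icc h0.le hTc.2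
    obtain ⟨x, hx, hxy⟩ := intermediate_value_Icc' hz.1 (hcont.mono hsub) ⟨hz.2, hyT⟩
    have hx1 : x ∈ Set.Icc c 1 := ⟨hx.1, hx.2.trans hTc.2⟩
    refine ⟨x, ⟨h0.le.trans hx.1, fun k hk => ⟨fun he => ?_, fun ho => ?_⟩⟩, hxy, ?_⟩
    · obtain ⟨g1, g2⟩ := hup k hk he
      rw [← hxy] at g2
      exact (ha.le_iff_ge ⟨g1, (iter_mem hT hTc k).2⟩ hx1).1 g2
    · rcases fin3_cases _ (kn1 k) with h | h
      · exact ((kn2 k).1 h).trans hx.1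
      · have := (hy.2 (k + 1) (KM_succ hk (by rw [hb, h]; rfl))).1
          (by rw [kneadOnes_succ, if_pos h]; exact ho.add_one)
        rw [Function.iterate_succ_apply', ← hxy] at this
        exact (ha.le_iff_ge hx1 ⟨(kn2 k).2 h, (iter_mem hT hTc k).2⟩).1 this
    · rcases hx.1.eq_or_lt with h | h
      · exact Or.inl h.symm
      · exact Or.inr (Or.inr ⟨h, rfl⟩)
  | false =>
    have hsub : Set.Icc 0 c ⊆ Set.Icc 0 1 := Set.Icc_subset_Icc le_rfl h1.le
    obtain ⟨x, hx, hxy⟩ := intermediate_value_Icc h0.le (hcont.mono hsub)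
      ⟨by rw [hT0]; exact hy.1, hyT⟩
    refine ⟨x, ⟨hx.1, fun k hk => ⟨fun he => ?_, fun ho => ?_⟩⟩, hxy, ?_⟩
    · rcases fin3_cases _ (kn1 k) with h | h
      · have := (hy.2 (k + 1) (KM_succ hk (by rw [hb, h]; rfl))).1
          (by rw [kneadOnes_succ, if_neg (by rw [h]; decide)]; exact he)
        rw [Function.iterate_succ_apply', ← hxy] at this
        exact (hm.le_iff_le hx ⟨(iter_mem hT hTc k).1, (kn2 k).1 h⟩).1 this
      · exact hx.2.trans ((kn2 k).2 h)
    · rcases fin3_cases _ (kn1 k) with h | h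
      · have := (hy.2 (k + 1) (KM_succ hk (by rw [hb, h]; rfl))).2
          (by rw [kneadOnes_succ, if_neg (by rw [h]; decide)]; exact ho)
        rw [Function.iterate_succ_apply', ← hxy] at this
        exact (hm.le_iff_le ⟨(iter_mem hT hTc k).1, (kn2 k).1 h⟩ hx).1 this
      · exact absurd ho ((hs0 k hk).2 hb h)
    · rcases hx.2.eq_or_lt with h | h
      · exact Or.inl h
      · exact Or.inr (Or.inl ⟨h, rfl⟩)

lemma StarCond_shift {T : ℝ → ℝ} {c : ℝ} {s : ℕ → Bool} (hs : StarCond T c s) (n : ℕ) :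
    StarCond T c (fun i => s (i + n)) := by
  intro j k hk
  apply hs (j + n) k
  intro i hi
  have := hk i hi
  simp only at this ⊢
  rw [← this]
  congr 2
  omega

lemma reg_subset {T : ℝ → ℝ} {c : ℝ} (hT : IsUnimodal T c) {s : ℕ → Bool} (hs : StarCond T c s)
    {y : ℝ} (hy : y ∈ Reg T c s) : y ∈ proj0 '' basicArc T c s := by
  have hTc : T c ∈ Set.Icc (0:ℝ) 1 := hT.2.1 ⟨hT.2.2.2.1.le, hT.2.2.2.2.1.le⟩
  have hst : ∀ n (z : Reg T c (fun i => s (i + n))), ∃ x : Reg T c (fun i => s (i + (n + 1))),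
      T x = z ∧ SymMatch c x (s n) := by
    intro n z
    obtain ⟨x, hx, h1, h2⟩ := step hT (StarCond_shift hs n) z.2
    have e : (fun i => s (i + 1 + n)) = fun i => s (i + (n + 1)) := by
      funext i
      congr 1
      omega
    simp only [Nat.zero_add] at h2
    rw [e] at hx
    exact ⟨⟨x, hx⟩, h1, h2⟩
  choose f hf1 hf2 using hst
  let X : (n : ℕ) → Reg T c (fun i => s (i + n)) := fun n =>
    Nat.rec (motive := fun n => Reg T c (fun i => s (i + n))) ⟨y, hy⟩ (fun n z => f n z) n
  have hX : ∀ n, X (n + 1) = f n (X n) := fun n => rfl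
  refine ⟨fun n => (X n : ℝ), ⟨⟨fun n => ⟨(X n).2.1, (Reg_le (X n).2).trans hTc.2⟩, fun n => ?_⟩,
    fun n => ?_⟩, rfl⟩
  · simp only [hX]
    exact hf1 n (X n)
  · simp only [hX]
    exact hf2 n (X n)

lemma subset_reg {T : ℝ → ℝ} {c : ℝ} (hT : IsUnimodal T c) {s : ℕ → Bool}
    {x : ℕ → ℝ} (hx : x ∈ basicArc T c s) : x 0 ∈ Reg T c s := by
  obtain ⟨⟨hI, hTx⟩, hsym⟩ := hx
  refine ⟨(hI 0).1, fun k hk => ?_⟩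
  have hit : ∀ i ≤ k, T^[i] (x k) = x (k - i) := by
    intro i
    induction i with
    | zero => simp
    | succ i ih =>
      intro hi
      rw [Function.iterate_succ_apply', ih (by omega), ← hTx (k - (i + 1))]
      congr 2
      omega
  have h := cmpIter hT (hI k) (by rw [← hTx k]; exact le_Tc hT (hI _)) k (by
    intro i hi
    rw [hit i hi.le]
    have a := hk (k - 1 - i) (by omega)
    rw [show k - 1 - (k - 1 - i) = i by omega] at a
    have b := hsym (k - 1 - i)
    rw [show k - 1 - i + 1 = k - i by omega] at b
    rw [← a]
    rcases b with b | ⟨b, b'⟩ | ⟨b, b'⟩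
    · rw [b]; exact ⟨fun _ => le_rfl, fun _ => le_rfl⟩
    · rw [b']; exact ⟨fun _ => b.le, fun h => absurd h (by decide)⟩
    · rw [b']; exact ⟨fun h => absurd h (by decide), fun _ => b.le⟩)
  rw [hit k le_rfl, Nat.sub_self] at h
  exact h

/-- Longer matches give stronger bounds. -/
lemma longer {T : ℝ → ℝ} {c : ℝ} (hT : IsUnimodal T c) {s : ℕ → Bool} {k K : ℕ} (hkK : k ≤ K)
    (hk : KM T c s k) (hK : KM T c s K) :
    (Even (kneadOnes T c k) → T^[K] (T c) ≤ T^[k] (T c)) ∧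
    (Odd (kneadOnes T c k) → T^[k] (T c) ≤ T^[K] (T c)) := by
  have hc1 : c ∈ Set.Icc (0:ℝ) 1 := ⟨hT.2.2.2.1.le, hT.2.2.2.2.1.le⟩
  have h := cmpIter hT (y := T^[K - k] (T c)) (iter_mem hT (hT.2.1 hc1) _) (by
    rw [← Function.iterate_succ_apply, Function.iterate_succ_apply']
    exact le_Tc hT (iter_mem hT hc1 _)) k (by
    intro i hi
    rw [← Function.iterate_add_apply]
    have a := hk (k - 1 - i) (by omega)
    have b := hK (k - 1 - i) (by omega)
    rw [a, show k - 1 - (k - 1 - i) = i by omega,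
      show K - 1 - (k - 1 - i) = i + (K - k) by omega] at b
    rw [b]
    exact (kneading_props T c).2.1 _)
  rw [← Function.iterate_add_apply, show k + (K - k) = K by omega] at h
  exact h

lemma KM_iff (T : ℝ → ℝ) (c : ℝ) (s : ℕ → Bool) (k : ℕ) :
    PrefixMatch T c s (k + 1) ↔ KM T c s k := by
  unfold PrefixMatch KM
  refine forall_congr' fun i => ?_
  rw [show k + 1 - 1 = k by omega, show k + 1 - 2 - i = k - 1 - i by omega]

/-- If `s ∈ {0,1}^{-ℕ}` is admissible and `τ_L(s) = nL < ∞`, `τ_R(s) = nR < ∞`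
(i.e. `nL` and `nR` are the greatest elements of the respective defining sets), then
`π₀(A(s)) = [T^{τ_L(s)}(c), T^{τ_R(s)}(c)]`. -/
theorem stmt5 (T : ℝ → ℝ) (c : ℝ) (hT : IsUnimodal T c) (s : ℕ → Bool)
    (hadm : AdmissibleLeft T c s) (nL nR : ℕ)
    (hL : IsGreatest (tauLSet T c s) nL) (hR : IsGreatest (tauRSet T c s) nR) :
    proj0 '' basicArc T c s = Set.Icc (T^[nL] c) (T^[nR] c) := by
  have hTc : T c ∈ Set.Icc (0:ℝ) 1 := hT.2.1 ⟨hT.2.2.2.1.le, hT.2.2.2.2.1.le⟩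
  obtain ⟨⟨l1, l2, l3⟩, lmax⟩ := hL
  obtain ⟨⟨r1, r2, r3⟩, rmax⟩ := hR
  obtain ⟨kL, rfl⟩ : ∃ k, nL = k + 1 := ⟨nL - 1, by omega⟩
  obtain ⟨kR, rfl⟩ : ∃ k, nR = k + 1 := ⟨nR - 1, by omega⟩
  rw [KM_iff] at l2 r2
  rw [Nat.add_sub_cancel] at l3 r3
  rw [Function.iterate_succ_apply, Function.iterate_succ_apply]
  apply Set.Subset.antisymm
  · rintro _ ⟨x, hx, rfl⟩
    have h := subset_reg hT hx
    exact ⟨(h.2 kL l2).2 l3, (h.2 kR r2).1 r3⟩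
  · intro y hy
    apply reg_subset hT (star_of_adm hT hadm)
    refine ⟨(iter_mem hT hTc kL).1.trans hy.1, fun k hk => ⟨fun he => ?_, fun ho => ?_⟩⟩
    · have hm : k + 1 ≤ kR + 1 := rmax ⟨by omega, (KM_iff T c s k).2 hk, he⟩
      exact hy.2.trans ((longer hT (by omega) hk r2).1 he)
    · have hk0 : k ≠ 0 := by
        rintro rfl
        simp [kneadOnes] at ho
      have hm : k + 1 ≤ kL + 1 := lmax ⟨by omega, (KM_iff T c s k).2 hk, ho⟩
      exact ((longer hT (by omega) hk l2).2 ho).trans hy.1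
end

section
/- Let U ⊂ ℝ² be homeomorphic to the open unit disk, J ⊂ ℝ a closed interval, and W ⊂ ℝ a closed set such that W × J ⊂ U. Then there exists a continuous function f : ℝ² → ℝ² such that f({w} × J) is a single point for every w ∈ W, f({w} × J) ≠ f({w'} × J) for all w ≠ w' ∈ W, the restriction of f to U ∖ (W × J) is injective, and f is the identity on ℝ² ∖ U. -/
open Metric Set MeasureTheory Topology

lemma no_ext (F : C(ℂ, ℂ)) (h0 : ∀ z, F z ≠ 0) (h1 : ∀ z : ℂ, ‖z‖ = 1 → ‖F z - z‖ < 1) : False := by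
  obtain ⟨L, ⟨-, hL⟩, -⟩ := Complex.isCoveringMap_exp.existsUnique_continuousMap_lifts
    (⟨fun z => ⟨F z, h0 z⟩, by fun_prop⟩ : C(ℂ, {z : ℂ // z ≠ 0})) 0 (Complex.log (F 0))
    (by ext; simp [Complex.exp_log (h0 0)])
  have hL' : ∀ z, Complex.exp (L z) = F z := fun z => congrArg Subtype.val (congrFun hL z)
  let e : ℝ → ℂ := fun t => Complex.exp (t * Complex.I)
  have he : Continuous e := by fun_prop
  have hen : ∀ t, ‖e t‖ = 1 := fun t => Complex.norm_exp_ofReal_mul_I t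
  have hene : ∀ t, e t ≠ 0 := fun t => Complex.exp_ne_zero _
  have hslit : ∀ t, F (e t) / e t ∈ Complex.slitPlane := by
    intro t
    left
    have h2 : ‖F (e t) / e t - 1‖ < 1 := by
      have : F (e t) / e t - 1 = (F (e t) - e t) / e t := by field_simp [hene t]
      rw [this, norm_div, hen, div_one]
      exact h1 _ (hen t)
    have h3 := (Complex.abs_re_le_norm _).trans_lt h2
    rw [abs_lt] at h3
    simp at h3
    linarith [h3.1]
  let g : ℝ → ℂ := fun t => L (e t) - Complex.log (F (e t) / e t) - t * Complex.I
  have hg : Continuous g := by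
    have : Continuous fun t => Complex.log (F (e t) / e t) :=
      Continuous.clog (Continuous.div (by fun_prop) he hene) hslit
    fun_prop
  have hg1 : ∀ t, Complex.exp (g t) = 1 := by
    intro t
    simp only [g]
    rw [Complex.exp_sub, Complex.exp_sub, hL', Complex.exp_log (Complex.slitPlane_ne_zero (hslit t))]
    change F (e t) / (F (e t) / e t) / e t = 1
    have := h0 (e t)
    have := hene t
    field_simp
  have hconst : ∀ s t, g s = g t := by
    intro s t
    have hlift := Complex.isCoveringMap_exp.isSeparatedMap.const_of_comp
      Complex.isCoveringMap_exp.isLocalHomeomorph.isLocallyInjective hg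
      (fun a a' => by ext; simp [hg1]) s t
    exact hlift
  have h2 : e (2 * Real.pi) = e 0 := by simp [e, Complex.exp_two_pi_mul_I]
  have h3 := hconst (2 * Real.pi) 0
  simp only [g, h2] at h3
  have h4 : ((2 * Real.pi : ℝ) : ℂ) * Complex.I = ((0 : ℝ) : ℂ) * Complex.I := by
    linear_combination -h3
  simp at h4

lemma inv_dom (h : closedBall (0 : ℂ) 1 → ℂ) (hc : Continuous h) (hi : Function.Injective h) :
    h ⟨0, by simp⟩ ∈ interior (range h) := by
  by_contra hint
  set o : closedBall (0 : ℂ) 1 := ⟨0, by simp⟩ with ho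
  have : CompactSpace (closedBall (0 : ℂ) 1) := isCompact_iff_compactSpace.mp (isCompact_closedBall _ _)
  have hemb : IsClosedEmbedding h := hc.isClosedEmbedding hi
  obtain ⟨G, hG⟩ := ContinuousMap.exists_extension' hemb
    (⟨Subtype.val, continuous_subtype_val⟩ : C(closedBall (0 : ℂ) 1, ℂ))
  have hG' : ∀ z, G (h z) = z := fun z => congrFun hG z
  -- rho
  have hS : IsClosed (h '' {z | ‖(z : ℂ)‖ = 1}) :=
    hemb.isClosedMap _ (isClosed_eq (by fun_prop) continuous_const)
  have hpS : h o ∈ (h '' {z | ‖(z : ℂ)‖ = 1})ᶜ := by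
    rintro ⟨z, hz, hzo⟩
    rw [hi hzo] at hz
    simp [ho] at hz
  obtain ⟨ρ, hρ, hρS⟩ := Metric.isOpen_iff.mp hS.isOpen_compl _ hpS
  obtain ⟨c, hcp, hcK⟩ : ∃ c, dist c (h o) < ρ / 2 ∧ c ∉ range h := by
    by_contra hcon
    push Not at hcon
    apply hint
    rw [mem_interior_iff_mem_nhds, Metric.mem_nhds_iff]
    exact ⟨ρ / 2, by linarith, fun c hc => hcon c hc⟩
  set ε := ρ / 2 with hε
  have hε0 : 0 < ε := by linarith
  have hK1 : IsOpen {z : closedBall (0 : ℂ) 1 | dist (h z) c < ε} :=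
    isOpen_lt (by fun_prop) continuous_const
  obtain ⟨m', hm', hmK⟩ := Metric.isOpen_iff.mp hK1 o (by simpa [dist_comm] using hcp)
  set m := min m' 1 with hm
  have hm0 : 0 < m := by positivity
  obtain ⟨P0, hP0, hP0G, -⟩ := G.continuous.exists_contDiff_approx 1 (ε := fun _ => m / 2)
    (by fun_prop) (fun _ => by positivity)
  have hnull : volume (P0 '' sphere c ε) = 0 :=
    addHaar_image_eq_zero_of_differentiableOn_of_addHaar_eq_zero volume
      (hP0.differentiable (by norm_num)).differentiableOn
      (Measure.addHaar_sphere volume c ε)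
  obtain ⟨v, hv, hvS⟩ : ∃ v ∈ ball (0 : ℂ) (m / 2), v ∉ P0 '' sphere c ε := by
    by_contra hcon
    push Not at hcon
    have h1 := measure_mono_null (μ := volume) (show ball (0 : ℂ) (m / 2) ⊆ _ from hcon) hnull
    exact (measure_ball_pos volume (0 : ℂ) (by positivity : 0 < m / 2)).ne' h1
  have hP : ∀ x, ‖P0 x - v - G x‖ < m := by
    intro x
    have h1 := hP0G x
    rw [dist_eq_norm] at h1
    have h2 : ‖v‖ < m / 2 := by simpa using hv
    have h3 : P0 x - v - G x = (P0 x - G x) - v := by ring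
    have h4 := norm_sub_le (P0 x - G x) v
    rw [h3]; linarith
  let r : ℂ → closedBall (0 : ℂ) 1 := fun z => ⟨((max 1 ‖z‖)⁻¹ : ℝ) • z, by
    rw [mem_closedBall_zero_iff, norm_smul, norm_inv, Real.norm_of_nonneg (by positivity)]
    rw [inv_mul_le_iff₀ (by positivity)]; simp⟩
  have hr : Continuous r := by
    apply Continuous.subtype_mk
    have h1 : Continuous fun z : ℂ => (max 1 ‖z‖)⁻¹ :=
      Continuous.inv₀ (by fun_prop) (fun z => by positivity)
    exact h1.smul continuous_id
  have hr1 : ∀ z, ‖z‖ = 1 → (r z : ℂ) = z := by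
    intro z hz; simp [r, hz]
  let Φ : ℂ → ℂ := fun y => c + (max ε ‖y - c‖ / ‖y - c‖ : ℝ) • (y - c)
  have hne : ∀ z, h z - c ≠ 0 := fun z hz => hcK ⟨z, sub_eq_zero.mp hz⟩
  have hΦ1 : ∀ z, ε ≤ dist (h z) c → Φ (h z) = h z := by
    intro z hz
    rw [dist_eq_norm] at hz
    simp only [Φ]
    rw [max_eq_right hz, div_self (norm_ne_zero_iff.mpr (hne z))]
    simp
  have hΦ2 : ∀ z, dist (h z) c < ε → Φ (h z) ∈ sphere c ε := by
    intro z hz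
    rw [dist_eq_norm] at hz
    simp only [Φ]
    rw [max_eq_left hz.le, mem_sphere_iff_norm, add_sub_cancel_left, norm_smul, norm_div, norm_norm,
      div_mul_cancel₀ _ (norm_ne_zero_iff.mpr (hne z)), Real.norm_of_nonneg hε0.le]
  have hΦc : Continuous fun z => Φ (h (r z)) := by
    have h1 : Continuous fun z => max ε ‖h (r z) - c‖ / ‖h (r z) - c‖ :=
      Continuous.div (by fun_prop) (by fun_prop) (fun z => norm_ne_zero_iff.mpr (hne _))
    have h2 : Continuous fun z => h (r z) - c := by fun_prop
    exact continuous_const.add (h1.smul h2)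
  have hP0c := hP0.continuous
  refine no_ext ⟨fun z => P0 (Φ (h (r z))) - v, (hP0c.comp hΦc).sub continuous_const⟩ ?_ ?_
  · intro z hz
    change P0 (Φ (h (r z))) - v = 0 at hz
    rcases lt_or_ge (dist (h (r z)) c) ε with h1 | h1
    · exact hvS ⟨_, hΦ2 _ h1, sub_eq_zero.mp hz⟩
    · have h2 := hP (Φ (h (r z)))
      rw [hz, hΦ1 _ h1, hG', zero_sub, norm_neg] at h2
      have h3 : r z ∈ ball o m' := by
        rw [mem_ball, Subtype.dist_eq, dist_eq_norm]
        simpa [ho] using h2.trans_le (min_le_left _ _)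
      exact absurd (hmK h3) (not_lt.mpr h1)
  · intro z hz
    change ‖P0 (Φ (h (r z))) - v - z‖ < 1
    have h1 : ε ≤ dist (h (r z)) c := by
      by_contra hcon
      push Not at hcon
      have : h (r z) ∈ ball (h o) ρ := by
        rw [mem_ball]
        have := dist_triangle (h (r z)) c (h o)
        linarith
      exact hρS this ⟨r z, by simp [hr1 z hz, hz], rfl⟩
    have h2 := hP (Φ (h (r z)))
    rw [hΦ1 _ h1, hG', hr1 z hz] at h2
    rw [hΦ1 _ h1]
    exact h2.trans_le (min_le_right _ _)

lemma U_open (U : Set (ℝ × ℝ)) (φ : U ≃ₜ Metric.ball (0 : ℝ × ℝ) 1) : IsOpen U := by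
  rw [isOpen_iff_mem_nhds]
  intro p hp
  let E := Complex.equivRealProdCLM
  let x := φ ⟨p, hp⟩
  have hx : ∀ᶠ w in 𝓝 (0 : ℂ), (x : ℝ × ℝ) + E w ∈ ball (0 : ℝ × ℝ) 1 := by
    have : ContinuousAt (fun w : ℂ => (x : ℝ × ℝ) + E w) 0 := by fun_prop
    exact this (isOpen_ball.mem_nhds (by simpa [-mem_ball] using x.2))
  obtain ⟨r, hr, hrb⟩ := Metric.nhds_basis_closedBall.mem_iff.mp hx
  have hmem : ∀ z : closedBall (0 : ℂ) 1, (x : ℝ × ℝ) + E ((r : ℂ) * z) ∈ ball (0 : ℝ × ℝ) 1 := by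
    intro z
    apply hrb
    have := mem_closedBall_zero_iff.mp z.2
    rw [mem_closedBall_zero_iff, norm_mul, Complex.norm_real, Real.norm_of_nonneg hr.le]
    nlinarith
  let k : closedBall (0 : ℂ) 1 → U := fun z => φ.symm ⟨_, hmem z⟩
  have hk : Continuous k := φ.symm.continuous.comp (Continuous.subtype_mk (by fun_prop) _)
  have hki : Function.Injective k := by
    intro z z' hzz
    have := congrArg Subtype.val (φ.symm.injective hzz)
    have h2 := E.injective (add_left_cancel this)
    exact Subtype.ext (mul_left_cancel₀ (by exact_mod_cast hr.ne') h2)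
  have hk0 : (k ⟨0, by simp⟩ : ℝ × ℝ) = p := by
    have : (⟨_, hmem ⟨0, by simp⟩⟩ : ball (0 : ℝ × ℝ) 1) = x := by ext <;> simp
    simp only [k]
    rw [this]
    simp [x]
  have hint := inv_dom (fun z => E.symm (k z)) (by fun_prop)
    (fun z z' hzz => hki (Subtype.ext (E.symm.injective hzz)))
  rw [mem_interior_iff_mem_nhds] at hint
  have h1 := E.symm.toHomeomorph.continuous.continuousAt (x := p)
  have h2 := h1.preimage_mem_nhds (t := range (fun z => E.symm (k z))) (by
    simp only [hk0] at hint
    exact hint)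
  filter_upwards [h2] with q hq
  obtain ⟨z, hz⟩ := hq
  have : (k z : ℝ × ℝ) = q := E.symm.injective hz
  rw [← this]; exact (k z).2

lemma exists_delta (U : Set (ℝ × ℝ)) (hU : IsOpen U) (a b : ℝ) (hab : a ≤ b) (W : Set ℝ)
    (hWJ : W ×ˢ Set.Icc a b ⊆ U) :
    ∃ δ : ℝ → ℝ, Continuous δ ∧ (∀ x, 0 ≤ δ x) ∧ (∀ x ∈ W, 0 < δ x) ∧
      ∀ x y y', y' ∈ Icc a b → |y - y'| < δ x → (x, y) ∈ U := by
  rcases Set.eq_empty_or_nonempty Uᶜ with he | hne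
  · refine ⟨fun _ => 1, continuous_const, fun _ => zero_le_one, fun _ _ => one_pos, ?_⟩
    intro x y _ _ _
    rw [Set.compl_empty_iff.mp he]; trivial
  · have hcont : Continuous ↿(fun (x y : ℝ) => infDist (x, y) Uᶜ) :=
      (continuous_infDist_pt Uᶜ)
    refine ⟨fun x => sInf ((fun y => infDist (x, y) Uᶜ) '' Icc a b),
      isCompact_Icc.continuous_sInf hcont, ?_, ?_, ?_⟩
    · intro x
      apply Real.sInf_nonneg
      rintro _ ⟨y, -, rfl⟩
      exact infDist_nonneg
    · intro x hx
      obtain ⟨y, hy, hxy⟩ := isCompact_Icc.exists_sInf_image_eq (Set.nonempty_Icc.mpr hab)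
        (f := fun y => infDist (x, y) Uᶜ) (hcont.comp (Continuous.prodMk_right x)).continuousOn
      simp only [hxy]
      rw [← hU.isClosed_compl.notMem_iff_infDist_pos hne]
      exact fun h => h (hWJ ⟨hx, hy⟩)
    · intro x y y' hy' hlt
      by_contra hxy
      have h1 : sInf ((fun y => infDist (x, y) Uᶜ) '' Icc a b) ≤ infDist (x, y') Uᶜ :=
        csInf_le ⟨0, by rintro _ ⟨y, -, rfl⟩; exact infDist_nonneg⟩ ⟨y', hy', rfl⟩
      have h2 : infDist (x, y') Uᶜ ≤ dist (x, y') (x, y) := infDist_le_dist_of_mem hxy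
      rw [Prod.dist_eq, dist_self, max_eq_right dist_nonneg, dist_comm, Real.dist_eq] at h2
      linarith

/-- the clamp onto `[a,b]` -/
noncomputable def qq (a b y : ℝ) : ℝ := max a (min y b)

/-- the unnormalised displacement -/
noncomputable def uu (a b δ y : ℝ) : ℝ := (qq a b y - (a + b) / 2) * max 0 (δ - |y - qq a b y|)

lemma qq_cases (a b y : ℝ) (hab : a ≤ b) :
    (y < a ∧ qq a b y = a) ∨ (a ≤ y ∧ y ≤ b ∧ qq a b y = y) ∨ (b < y ∧ qq a b y = b) := by
  unfold qq
  grind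

lemma uu_le (a b δ y₁ y₂ : ℝ) (hab : a ≤ b) (hδ : 0 ≤ δ) (h : y₁ < y₂) :
    uu a b δ y₂ - uu a b δ y₁ ≤ δ * (qq a b y₂ - qq a b y₁) := by
  have lowr : ∀ y, b < y → qq a b y = b → uu a b δ y ≤ (b - a) / 2 * δ := by
    intro y hy hq
    unfold uu
    rw [hq]
    have : max 0 (δ - |y - b|) ≤ δ := max_le hδ (by linarith [abs_nonneg (y - b)])
    nlinarith
  have lowl : ∀ y, y < a → qq a b y = a → -((b - a) / 2 * δ) ≤ uu a b δ y := by
    intro y hy hq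
    unfold uu
    rw [hq]
    have : max 0 (δ - |y - a|) ≤ δ := max_le hδ (by linarith [abs_nonneg (y - a)])
    nlinarith
  have mid : ∀ y, qq a b y = y → uu a b δ y = (y - (a + b) / 2) * δ := by
    intro y hq
    unfold uu
    rw [hq]; simp [hδ]
  rcases qq_cases a b y₁ hab with ⟨h1, q1⟩ | ⟨h1, h1', q1⟩ | ⟨h1, q1⟩ <;>
  rcases qq_cases a b y₂ hab with ⟨h2, q2⟩ | ⟨h2, h2', q2⟩ | ⟨h2, q2⟩
  · unfold uu
    rw [q1, q2, abs_of_neg (by linarith), abs_of_neg (by linarith)]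
    have : max 0 (δ - -(y₁ - a)) ≤ max 0 (δ - -(y₂ - a)) := max_le_max_left _ (by linarith)
    nlinarith
  · have := lowl _ h1 q1
    rw [mid _ q2, q1, q2]; nlinarith
  · have := lowl _ h1 q1
    have := lowr _ h2 q2
    rw [q1, q2]; nlinarith
  · linarith
  · rw [mid _ q1, mid _ q2, q1, q2]; nlinarith
  · have := lowr _ h2 q2
    rw [mid _ q1, q1, q2]; nlinarith
  · linarith
  · linarith
  · unfold uu
    rw [q1, q2, abs_of_pos (by linarith), abs_of_pos (by linarith)]
    have : max 0 (δ - (y₂ - b)) ≤ max 0 (δ - (y₁ - b)) := max_le_max_left _ (by linarith)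
    nlinarith

lemma uu_lt (a b δ D y₁ y₂ : ℝ) (hab : a ≤ b) (hδ : 0 ≤ δ) (hD : 0 ≤ D) (hs : 0 < δ + D)
    (h : y₁ < y₂) (hc : 0 < D ∨ (y₁ ∉ Icc a b ∧ y₂ ∉ Icc a b)) :
    y₁ - uu a b δ y₁ / (δ + D) < y₂ - uu a b δ y₂ / (δ + D) := by
  have h1 := uu_le a b δ y₁ y₂ hab hδ h
  have h2 : uu a b δ y₂ - uu a b δ y₁ < (y₂ - y₁) * (δ + D) := by
    refine h1.trans_lt ?_
    have hq0 : 0 ≤ qq a b y₂ - qq a b y₁ := by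
      unfold qq; grind
    have hq1 : qq a b y₂ - qq a b y₁ ≤ y₂ - y₁ := by
      unfold qq; grind
    rcases hc with hc | ⟨n1, n2⟩
    · rcases hq0.eq_or_lt with h0 | h0
      · rw [← h0]; nlinarith
      · nlinarith
    · have hq2 : qq a b y₂ - qq a b y₁ < y₂ - y₁ := by
        rw [mem_Icc] at n1 n2
        unfold qq; grind
      nlinarith
  rw [← div_lt_iff₀ hs, sub_div] at h2
  linarith


/-- Let `U ⊆ ℝ²` be homeomorphic to the open unit disk, let `J = [a,b] ⊆ ℝ` be a closed
interval and `W ⊆ ℝ` a closed set with `W × J ⊆ U`. Then there is a continuous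
`f : ℝ² → ℝ²` collapsing each segment `{w} × J` (`w ∈ W`) to a point, with distinct
segments going to distinct points, injective on `U ∖ (W × J)`, and equal to the
identity outside `U`. -/
theorem stmt14 (U : Set (ℝ × ℝ)) (hU : Nonempty (U ≃ₜ Metric.ball (0 : ℝ × ℝ) 1))
    (a b : ℝ) (hab : a ≤ b) (W : Set ℝ) (hW : IsClosed W)
    (hWJ : W ×ˢ Set.Icc a b ⊆ U) :
    ∃ f : ℝ × ℝ → ℝ × ℝ, Continuous f ∧
      (∀ w ∈ W, ∃ p : ℝ × ℝ, f '' ({w} ×ˢ Set.Icc a b) = {p}) ∧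
      (∀ w ∈ W, ∀ w' ∈ W, w ≠ w' → f '' ({w} ×ˢ Set.Icc a b) ≠ f '' ({w'} ×ˢ Set.Icc a b)) ∧
      Set.InjOn f (U \ W ×ˢ Set.Icc a b) ∧
      ∀ x ∉ U, f x = x := by
  obtain ⟨φ⟩ := hU
  have hUo := U_open U φ
  rcases W.eq_empty_or_nonempty with rfl | hWne
  · exact ⟨id, continuous_id, by simp, by simp, injOn_id _, fun _ _ => rfl⟩
  obtain ⟨δ, hδc, hδ0, hδW, hδU⟩ := exists_delta U hUo a b hab W hWJ
  have hs : ∀ x, 0 < δ x + infDist x W := by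
    intro x
    by_cases hx : x ∈ W
    · linarith [hδW x hx, infDist_nonneg (x := x) (s := W)]
    · linarith [hδ0 x, (hW.notMem_iff_infDist_pos hWne).mp hx]
  let f : ℝ × ℝ → ℝ × ℝ := fun p =>
    (p.1, p.2 - uu a b (δ p.1) p.2 / (δ p.1 + infDist p.1 W))
  have hfW : ∀ w ∈ W, f '' ({w} ×ˢ Set.Icc a b) = {(w, (a + b) / 2)} := by
    intro w hw
    have key : ∀ y ∈ Icc a b, f (w, y) = (w, (a + b) / 2) := by
      intro y hy
      have hq : qq a b y = y := by
        unfold qq; rw [min_eq_left hy.2, max_eq_right hy.1]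
      have hw0 : infDist w W = 0 := infDist_zero_of_mem hw
      have hd := hδW w hw
      simp only [f, uu, hq, hw0]
      congr 1
      simp [hd.le, hd.ne']
    ext p
    constructor
    · rintro ⟨⟨x, y⟩, ⟨hx, hy⟩, rfl⟩
      simp only [mem_singleton_iff] at hx
      subst hx
      exact key y hy
    · rintro rfl
      exact ⟨(w, a), ⟨rfl, left_mem_Icc.mpr hab⟩, key a (left_mem_Icc.mpr hab)⟩
  refine ⟨f, ?_, fun w hw => ⟨_, hfW w hw⟩, ?_, ?_, ?_⟩
  · have hu : Continuous fun p : ℝ × ℝ => uu a b (δ p.1) p.2 := by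
      unfold uu qq; fun_prop
    have hd : Continuous fun p : ℝ × ℝ => δ p.1 + infDist p.1 W :=
      (hδc.comp continuous_fst).add ((continuous_infDist_pt W).comp continuous_fst)
    exact continuous_fst.prodMk (continuous_snd.sub (hu.div hd fun p => (hs p.1).ne'))
  · intro w hw w' hw' hne h
    rw [hfW w hw, hfW w' hw', Set.singleton_eq_singleton_iff] at h
    exact hne (congrArg Prod.fst h)
  · rintro ⟨x, y⟩ ⟨-, h1⟩ ⟨x', y'⟩ ⟨-, h2⟩ h
    have hx : x = x' := congrArg Prod.fst h
    subst hx
    have hy := congrArg Prod.snd h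
    simp only [f] at hy
    have hc : 0 < infDist x W ∨ (y ∉ Icc a b ∧ y' ∉ Icc a b) := by
      by_cases hx : x ∈ W
      · exact Or.inr ⟨fun h => h1 ⟨hx, h⟩, fun h => h2 ⟨hx, h⟩⟩
      · exact Or.inl ((hW.notMem_iff_infDist_pos hWne).mp hx)
    rcases lt_trichotomy y y' with hlt | heq | hlt
    · exact absurd hy (uu_lt a b _ _ y y' hab (hδ0 x) infDist_nonneg (hs x) hlt hc).ne
    · rw [heq]
    · exact absurd hy (uu_lt a b _ _ y' y hab (hδ0 x) infDist_nonneg (hs x) hlt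
        (hc.imp_right And.symm)).ne'
  · rintro ⟨x, y⟩ hxy
    have hq : qq a b y ∈ Icc a b := by
      unfold qq
      exact ⟨le_max_left _ _, max_le hab (min_le_right _ _)⟩
    have h1 : δ x ≤ |y - qq a b y| := by
      by_contra hcon
      exact hxy (hδU x y _ hq (not_le.mp hcon))
    have h2 : uu a b (δ x) y = 0 := by
      unfold uu
      rw [max_eq_left (by linarith), mul_zero]
    simp [f, h2]
end
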